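/- Let f : 𝕊 → ℂ be continuous with f(z) ≠ 0 for all z ∈ 𝕊, and assume that ∑_{k∈ℤ} |f̂_k| < ∞. Then there exist an integer κ, a continuous map F₊ : 𝔻̄ → ℂ which is holomorphic on 𝔻, nowhere vanishing on 𝔻̄, and whose restriction to 𝕊 has absolutely summable Fourier coefficients, and a continuous map F₋ : {z ∈ ℂ : |z| ≥ 1} → ℂ which is holomorphic on {z : |z| > 1}, nowhere vanishing, has a nonzero limit F₋(∞) as |z| → ∞, and whose restriction to 𝕊 has absolutely summable Fourier coefficients, such that f(z) = F₊(z)·z^κ·F₋(z) for all z ∈ 𝕊. Moreover, the integer κ is uniquely determined by f. -/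

import Mathlib

open Metric Filter

/-- The `k`-th Fourier coefficient `∫₀¹ f(e^{2πit}) e^{−2πikt} dt` of a function on the
unit circle (given as a function on `ℂ`, only its values on the circle matter). -/
noncomputable def circleFourierCoeff (f : ℂ → ℂ) (k : ℤ) : ℂ :=
  ∫ t in (0:ℝ)..1,
    f (Complex.exp (2 * (Real.pi : ℂ) * Complex.I * (t : ℂ))) *
      Complex.exp (-(2 * (Real.pi : ℂ) * Complex.I * (k : ℂ) * (t : ℂ)))

/-- A scalar Birkhoff decomposition `f = F₊ · z^κ · F₋` on the unit circle, where `F₊` is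
continuous on the closed unit disk, holomorphic on the open disk, nowhere vanishing, with
absolutely summable boundary Fourier coefficients, and `F₋` is continuous on `{|z| ≥ 1}`,
holomorphic on `{|z| > 1}`, nowhere vanishing, with a nonzero limit at `∞` and absolutely
summable boundary Fourier coefficients. -/
def WienerScalarFactorization (f : ℂ → ℂ) (κ : ℤ) : Prop :=
  ∃ Fp Fm : ℂ → ℂ, ∃ L : ℂ,
    ContinuousOn Fp (closedBall 0 1) ∧
    DifferentiableOn ℂ Fp (ball 0 1) ∧
    (∀ z ∈ closedBall (0 : ℂ) 1, Fp z ≠ 0) ∧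
    Summable (fun k : ℤ => ‖circleFourierCoeff Fp k‖) ∧
    ContinuousOn Fm {z : ℂ | 1 ≤ ‖z‖} ∧
    DifferentiableOn ℂ Fm {z : ℂ | 1 < ‖z‖} ∧
    (∀ z : ℂ, 1 ≤ ‖z‖ → Fm z ≠ 0) ∧
    L ≠ 0 ∧
    Tendsto Fm (comap (fun z : ℂ => ‖z‖) atTop) (nhds L) ∧
    Summable (fun k : ℤ => ‖circleFourierCoeff Fm k‖) ∧
    ∀ z : ℂ, ‖z‖ = 1 → f z = Fp z * z ^ κ * Fm z

/-!
The characters of `ℓ¹(ℤ)` are the evaluations at points of the circle, so `f` is invertible in the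
Wiener algebra (Wiener's lemma). Laurent polynomials are dense there and the exponential covers a
neighbourhood of `1`, hence `f = p · exp g` with `p` a Laurent polynomial without zeros on the
circle. Splitting the Fourier series of `g` into nonnegative and negative powers factors `exp g`
with index `0`; a linear factor `z - a` of `p` is of type `F₊` if `1 < |a|`, and it equals
`z · (1 - a z⁻¹)` if `|a| < 1`. Throughout, `F₋` is treated as a function of type `F₊` in the
variable `z⁻¹`.

Two factorizations whose indices differ by `n > 0` give `zⁿ F₊ / G₊ = G₋ / F₋` on the circle. The
circle averages of both sides are the values of the left side at `0` and of the right side at `∞`,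
so `G₋(∞) / F₋(∞) = 0`, which is absurd.
-/

open MeasureTheory Topology

section Fourier

lemma fourierCoeff_tsum_fourier_smul {T : ℝ} [Fact (0 < T)] {E : Type*} [NormedAddCommGroup E]
    [NormedSpace ℂ E] [CompleteSpace E] {a : ℤ → E} (ha : Summable fun k => ‖a k‖) (n : ℤ) :
    fourierCoeff (fun x : AddCircle T => ∑' k, fourier k x • a k) n = a n := by
  have norm_term (k : ℤ) (x : AddCircle T) : ‖fourier (-n) x • fourier k x • a k‖ = ‖a k‖ := by
    rw [norm_smul, norm_smul, fourier_apply, fourier_apply, Circle.norm_coe, Circle.norm_coe,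
      one_mul, one_mul]
  have integral_term (k : ℤ) : ∫ x : AddCircle T, fourier (-n) x • fourier k x • a k
      ∂AddCircle.haarAddCircle = (Pi.single k 1 : ℤ → ℂ) n • a k := by
    simp only [← fourierCoeff_fourier (T := T) k, fourierCoeff, ← integral_smul_const, smul_assoc]
  have hasSum_coeff := hasSum_integral_of_summable_integral_norm
    (μ := AddCircle.haarAddCircle (T := T))
    (F := fun k (x : AddCircle T) => fourier (-n) x • fourier k x • a k)
    (fun k => Continuous.integrable_of_hasCompactSupport (by fun_prop) (.of_compactSpace _))
    (by simpa only [norm_term, integral_const, probReal_univ, one_smul] using ha)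
  simp only [integral_term, tsum_const_smul''] at hasSum_coeff
  rw [fourierCoeff, hasSum_coeff.unique (hasSum_single n fun k hk => by simp [hk.symm])]
  simp

lemma circleFourierCoeff_eq_fourierCoeff (f : ℂ → ℂ) :
    circleFourierCoeff f = fourierCoeff fun x : AddCircle (1 : ℝ) => f (AddCircle.toCircle x) := by
  ext k
  rw [fourierCoeff_eq_intervalIntegral _ k 0, circleFourierCoeff]
  simp only [div_one, one_smul, zero_add]
  refine intervalIntegral.integral_congr fun t _ => ?_
  simp only [fourier_coe_apply, smul_eq_mul, AddCircle.toCircle_apply_mk, Circle.coe_exp]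
  rw [mul_comm]
  congr 2
  · push_cast; ring
  · push_cast; congr 1; ring

lemma circleFourierCoeff_congr {f g : ℂ → ℂ} (h : ∀ z : Circle, f z = g z) :
    circleFourierCoeff f = circleFourierCoeff g := by
  simp only [circleFourierCoeff_eq_fourierCoeff, h]

lemma circleFourierCoeff_comp_inv (f : ℂ → ℂ) (k : ℤ) :
    circleFourierCoeff (fun z => f z⁻¹) k = circleFourierCoeff f (-k) := by
  simp only [circleFourierCoeff_eq_fourierCoeff, fourierCoeff]
  rw [← MeasureTheory.integral_neg_eq_self]
  simp [fourier_apply, AddCircle.toCircle_neg]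

lemma summable_norm_circleFourierCoeff_comp_inv {f : ℂ → ℂ} :
    (Summable fun k => ‖circleFourierCoeff (fun z => f z⁻¹) k‖) ↔
      Summable fun k => ‖circleFourierCoeff f k‖ := by
  simp only [circleFourierCoeff_comp_inv]
  exact (Equiv.neg ℤ).summable_iff (f := fun k => ‖circleFourierCoeff f k‖)

lemma circleFourierCoeff_of_hasSum {a : ℤ → ℂ} (ha : Summable fun k => ‖a k‖) {f : ℂ → ℂ}
    (hf : ∀ z : Circle, HasSum (fun k => a k * (z : ℂ) ^ k) (f z)) :
    circleFourierCoeff f = a := by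
  ext n
  rw [circleFourierCoeff_eq_fourierCoeff, ← fourierCoeff_tsum_fourier_smul (T := 1) ha n]
  congr 1 with x
  rw [← (hf (AddCircle.toCircle x)).tsum_eq]
  simp [fourier_apply, AddCircle.toCircle_zsmul, mul_comm]

lemma hasSum_circleFourierCoeff_mul_zpow {f : ℂ → ℂ} (hf : ContinuousOn f {z : ℂ | ‖z‖ = 1})
    (hs : Summable fun k => ‖circleFourierCoeff f k‖) (z : Circle) :
    HasSum (fun k => circleFourierCoeff f k * (z : ℂ) ^ k) (f z) := by
  obtain ⟨x, rfl⟩ : ∃ x : AddCircle (1 : ℝ), AddCircle.toCircle x = z := by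
    simpa only [AddCircle.homeomorphCircle_apply] using
      (AddCircle.homeomorphCircle one_ne_zero).surjective z
  let g : C(AddCircle (1 : ℝ), ℂ) :=
    ⟨fun x => f (AddCircle.toCircle x), hf.comp_continuous (by fun_prop) fun x => Circle.norm_coe _⟩
  have hg : fourierCoeff g = circleFourierCoeff f := (circleFourierCoeff_eq_fourierCoeff f).symm
  have hsum := has_pointwise_sum_fourier_series_of_summable (hg ▸ hs.of_norm) x
  rw [hg] at hsum
  simpa [g, fourier_apply, AddCircle.toCircle_zsmul] using hsum

end Fourier

section Convolution

open DiscreteConvolution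

variable {S M R : Type*} [CommSemiring S] [AddMonoid M] [NormedRing R] [Algebra S R] {f g : M → R}

lemma norm_addConvolution_mul_le (hf : Summable fun k => ‖f k‖) (hg : Summable fun k => ‖g k‖)
    (n : M) : ‖(f ⋆₊[LinearMap.mul S R] g) n‖ ≤
      ((fun k => ‖f k‖) ⋆₊[LinearMap.mul ℝ ℝ] (fun k => ‖g k‖)) n :=
  (norm_tsum_le_tsum_norm ((hf.mul_norm hg).subtype _)).trans <|
    ((hf.mul_norm hg).subtype _).tsum_le_tsum (fun _ => norm_mul_le _ _)
      ((hf.mul_of_nonneg hg (fun _ => norm_nonneg _) fun _ => norm_nonneg _).subtype _)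

lemma hasSum_addConvolution_mul [CompleteSpace R] (hf : Summable fun k => ‖f k‖)
    (hg : Summable fun k => ‖g k‖) :
    HasSum (f ⋆₊[LinearMap.mul S R] g) ((∑' k, f k) * ∑' k, g k) := by
  have addFiber_eq (n : M) : addFiber n = (fun p : M × M => p.1 + p.2) ⁻¹' {n} :=
    Set.ext fun _ => mem_addFiber
  have convolution_eq : f ⋆₊[LinearMap.mul S R] g =
      fun n => ∑' p : (fun p : M × M => p.1 + p.2) ⁻¹' {n}, f p.1.1 * g p.1.2 :=
    funext fun n => by rw [← addFiber_eq]; rfl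
  rw [tsum_mul_tsum_of_summable_norm hf hg, convolution_eq]
  exact (summable_mul_of_summable_norm hf hg).hasSum.tsum_fiberwise fun p : M × M => p.1 + p.2

lemma summable_norm_addConvolution_mul (hf : Summable fun k => ‖f k‖)
    (hg : Summable fun k => ‖g k‖) : Summable fun n => ‖(f ⋆₊[LinearMap.mul S R] g) n‖ :=
  .of_nonneg_of_le (fun _ => norm_nonneg _) (norm_addConvolution_mul_le hf hg)
    (hasSum_addConvolution_mul hf.norm hg.norm).summable

lemma tsum_norm_addConvolution_mul_le (hf : Summable fun k => ‖f k‖)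
    (hg : Summable fun k => ‖g k‖) :
    ∑' n, ‖(f ⋆₊[LinearMap.mul S R] g) n‖ ≤ (∑' k, ‖f k‖) * ∑' k, ‖g k‖ :=
  hasSum_le (norm_addConvolution_mul_le hf hg) (summable_norm_addConvolution_mul hf hg).hasSum
    (hasSum_addConvolution_mul hf.norm hg.norm)

end Convolution

section WienerAlgebra

open DiscreteConvolution

/-- The Wiener algebra of the circle, encoded as the space `ℓ¹(ℤ)` of sequences of Fourier
coefficients; its product is the convolution. -/
def WienerAlgebra : Type := lp (fun _ : ℤ => ℂ) 1

namespace WienerAlgebra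

noncomputable instance : NormedAddCommGroup WienerAlgebra :=
  inferInstanceAs (NormedAddCommGroup (lp (fun _ : ℤ => ℂ) 1))

noncomputable instance : NormedSpace ℂ WienerAlgebra :=
  inferInstanceAs (NormedSpace ℂ (lp (fun _ : ℤ => ℂ) 1))

instance : CompleteSpace WienerAlgebra :=
  inferInstanceAs (CompleteSpace (lp (fun _ : ℤ => ℂ) 1))

/-- The sequence of Fourier coefficients of an element of the Wiener algebra. -/
def coeff (a : WienerAlgebra) : ℤ → ℂ := a.1

/-- The element of the Wiener algebra with a given absolutely summable sequence of Fourier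
coefficients. -/
def ofCoeff (a : ℤ → ℂ) (ha : Summable fun k => ‖a k‖) : WienerAlgebra :=
  ⟨a, memℓp_gen (by simpa using ha)⟩

@[simp] lemma coeff_ofCoeff (a : ℤ → ℂ) (ha : Summable fun k => ‖a k‖) :
    (ofCoeff a ha).coeff = a := rfl

@[simp] lemma coeff_add (a b : WienerAlgebra) : (a + b).coeff = a.coeff + b.coeff := rfl

@[simp] lemma coeff_smul (c : ℂ) (a : WienerAlgebra) : (c • a).coeff = c • a.coeff := rfl

lemma coeff_injective : Function.Injective coeff := Subtype.val_injective

lemma summable_norm_coeff (a : WienerAlgebra) : Summable fun k => ‖a.coeff k‖ := by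
  have := (lp.memℓp (show lp (fun _ : ℤ => ℂ) 1 from a)).summable (by simp)
  simp only [ENNReal.toReal_one, Real.rpow_one] at this
  exact this

lemma norm_eq_tsum (a : WienerAlgebra) : ‖a‖ = ∑' k, ‖a.coeff k‖ := by
  have := lp.norm_eq_tsum_rpow (by simp) (show lp (fun _ : ℤ => ℂ) 1 from a)
  simp only [ENNReal.toReal_one, Real.rpow_one, div_one] at this
  exact this

lemma norm_coeff_mul_zpow (a : WienerAlgebra) (z : Circle) (k : ℤ) :
    ‖a.coeff k * (z : ℂ) ^ k‖ = ‖a.coeff k‖ := by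
  rw [norm_mul, norm_zpow, Circle.norm_coe, one_zpow, mul_one]

lemma summable_norm_coeff_mul_zpow (a : WienerAlgebra) (z : Circle) :
    Summable fun k => ‖a.coeff k * (z : ℂ) ^ k‖ := by
  simpa only [norm_coeff_mul_zpow] using a.summable_norm_coeff

/-- Evaluation at a point of the circle, as a bounded functional. It is upgraded to a character in
`WienerAlgebra.eval` once the product is available. -/
noncomputable def evalCLM (z : Circle) : WienerAlgebra →L[ℂ] ℂ :=
  LinearMap.mkContinuous
    { toFun a := ∑' k, a.coeff k * (z : ℂ) ^ k
      map_add' a b := by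
        simp only [coeff_add, Pi.add_apply, add_mul]
        exact (a.summable_norm_coeff_mul_zpow z).of_norm.tsum_add
          (b.summable_norm_coeff_mul_zpow z).of_norm
      map_smul' c a := by
        simp only [coeff_smul, Pi.smul_apply, smul_eq_mul, mul_assoc, tsum_mul_left,
          RingHom.id_apply] } 1
    fun a => by
      rw [one_mul, norm_eq_tsum]
      simpa only [norm_coeff_mul_zpow] using!
        norm_tsum_le_tsum_norm (a.summable_norm_coeff_mul_zpow z)

lemma evalCLM_apply (z : Circle) (a : WienerAlgebra) :
    evalCLM z a = ∑' k, a.coeff k * (z : ℂ) ^ k := rfl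

lemma circleFourierCoeff_of_eq_evalCLM {f : ℂ → ℂ} {a : WienerAlgebra}
    (h : ∀ z : Circle, f z = evalCLM z a) : circleFourierCoeff f = a.coeff :=
  circleFourierCoeff_of_hasSum a.summable_norm_coeff fun z =>
    h z ▸ (a.summable_norm_coeff_mul_zpow z).of_norm.hasSum

lemma ext_evalCLM {a b : WienerAlgebra} (h : ∀ z, evalCLM z a = evalCLM z b) : a = b := by
  let f (z : ℂ) := ∑' k, a.coeff k * z ^ k
  have ha : circleFourierCoeff f = a.coeff := circleFourierCoeff_of_eq_evalCLM fun _ => rfl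
  have hb : circleFourierCoeff f = b.coeff := circleFourierCoeff_of_eq_evalCLM h
  exact coeff_injective (ha.symm.trans hb)

noncomputable instance : Mul WienerAlgebra where
  mul a b := ofCoeff (a.coeff ⋆₊[LinearMap.mul ℂ ℂ] b.coeff)
    (summable_norm_addConvolution_mul a.summable_norm_coeff b.summable_norm_coeff)

lemma coeff_mul (a b : WienerAlgebra) :
    (a * b).coeff = a.coeff ⋆₊[LinearMap.mul ℂ ℂ] b.coeff := rfl

lemma evalCLM_mul (z : Circle) (a b : WienerAlgebra) :
    evalCLM z (a * b) = evalCLM z a * evalCLM z b := by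
  have term_mul (n : ℤ) : (a * b).coeff n * (z : ℂ) ^ n =
      ((fun k => a.coeff k * (z : ℂ) ^ k) ⋆₊[LinearMap.mul ℂ ℂ]
        (fun k => b.coeff k * (z : ℂ) ^ k)) n := by
    rw [coeff_mul]
    refine tsum_mul_right.symm.trans (tsum_congr fun ⟨p, hp⟩ => ?_)
    have zpow_eq : (z : ℂ) ^ n = (z : ℂ) ^ p.1 * (z : ℂ) ^ p.2 := by
      rw [← mem_addFiber.1 hp, zpow_add₀ z.coe_ne_zero]
    rw [zpow_eq]
    exact mul_mul_mul_comm _ _ _ _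
  simp only [evalCLM_apply, term_mul]
  exact (hasSum_addConvolution_mul (a.summable_norm_coeff_mul_zpow z)
    (b.summable_norm_coeff_mul_zpow z)).tsum_eq

/-- The element `z ↦ z ^ k` of the Wiener algebra. -/
noncomputable def monomial (k : ℤ) : WienerAlgebra :=
  (lp.single 1 k (1 : ℂ) : lp (fun _ : ℤ => ℂ) 1)

@[simp] lemma coeff_monomial (k : ℤ) : (monomial k).coeff = Pi.single k 1 := rfl

@[simp] lemma norm_monomial (k : ℤ) : ‖monomial k‖ = 1 :=
  (lp.norm_single (E := fun _ : ℤ => ℂ) zero_lt_one k 1).trans norm_one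

@[simp] lemma evalCLM_monomial (z : Circle) (k : ℤ) : evalCLM z (monomial k) = (z : ℂ) ^ k := by
  rw [evalCLM_apply, tsum_eq_single k fun j hj => by simp [hj]]
  simp

lemma hasSum_coeff_smul_monomial (a : WienerAlgebra) :
    HasSum (fun k => a.coeff k • monomial k) a := by
  have single_eq (k : ℤ) :
      a.coeff k • monomial k = (lp.single 1 k (a.coeff k) : lp (fun _ : ℤ => ℂ) 1) :=
    coeff_injective <| by
      rw [coeff_smul, coeff_monomial, ← Pi.single_smul, smul_eq_mul, mul_one]; rfl
  simp only [single_eq]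
  exact lp.hasSum_single ENNReal.one_ne_top a

noncomputable instance : One WienerAlgebra := ⟨monomial 0⟩

lemma evalCLM_one (z : Circle) : evalCLM z 1 = 1 :=
  (evalCLM_monomial z 0).trans (zpow_zero _)

noncomputable instance : NormedCommRing WienerAlgebra where
  __ : NormedAddCommGroup WienerAlgebra := inferInstance
  left_distrib a b c := ext_evalCLM fun z => by simp only [evalCLM_mul, map_add, mul_add]
  right_distrib a b c := ext_evalCLM fun z => by simp only [evalCLM_mul, map_add, add_mul]
  zero_mul a := ext_evalCLM fun z => by simp only [evalCLM_mul, map_zero, zero_mul]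
  mul_zero a := ext_evalCLM fun z => by simp only [evalCLM_mul, map_zero, mul_zero]
  mul_assoc a b c := ext_evalCLM fun z => by simp only [evalCLM_mul, mul_assoc]
  one_mul a := ext_evalCLM fun z => by simp only [evalCLM_mul, evalCLM_one, one_mul]
  mul_one a := ext_evalCLM fun z => by simp only [evalCLM_mul, evalCLM_one, mul_one]
  mul_comm a b := ext_evalCLM fun z => by simp only [evalCLM_mul, mul_comm]
  norm_mul_le a b := by
    simpa only [norm_eq_tsum, coeff_mul] using
      tsum_norm_addConvolution_mul_le a.summable_norm_coeff b.summable_norm_coeff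

noncomputable instance : NormedAlgebra ℂ WienerAlgebra where
  __ := Algebra.ofModule
    (fun c a b => ext_evalCLM fun z => by simp only [evalCLM_mul, map_smul, smul_mul_assoc])
    (fun c a b => ext_evalCLM fun z => by simp only [evalCLM_mul, map_smul, mul_smul_comm])
  norm_smul_le := norm_smul_le

instance : NormOneClass WienerAlgebra := ⟨norm_monomial 0⟩

/-- Evaluation at a point of the circle, as a character of the Wiener algebra. -/
noncomputable def eval (z : Circle) : WienerAlgebra →A[ℂ] ℂ where
  __ := AlgHom.ofLinearMap (evalCLM z).toLinearMap (evalCLM_one z) (evalCLM_mul z)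
  cont := (evalCLM z).continuous

@[simp] lemma eval_monomial (z : Circle) (k : ℤ) : eval z (monomial k) = (z : ℂ) ^ k :=
  evalCLM_monomial z k

lemma hasSum_eval (z : Circle) (a : WienerAlgebra) :
    HasSum (fun k => a.coeff k * (z : ℂ) ^ k) (eval z a) :=
  (a.summable_norm_coeff_mul_zpow z).of_norm.hasSum

lemma ext_eval {a b : WienerAlgebra} (h : ∀ z, eval z a = eval z b) : a = b :=
  ext_evalCLM h

lemma exists_eval_eq_of_summable {f : ℂ → ℂ} (hf : ContinuousOn f {z : ℂ | ‖z‖ = 1})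
    (hs : Summable fun k => ‖circleFourierCoeff f k‖) : ∃ a, ∀ z : Circle, f z = eval z a :=
  ⟨ofCoeff _ hs, fun z => (hasSum_circleFourierCoeff_mul_zpow hf hs z).unique <| by
    simpa only [coeff_ofCoeff] using hasSum_eval z (ofCoeff _ hs)⟩

lemma eval_exp (z : Circle) (a : WienerAlgebra) :
    eval z (NormedSpace.exp a) = Complex.exp (eval z a) := by
  let _ : NormedAlgebra ℚ WienerAlgebra := NormedAlgebra.restrictScalars ℚ ℂ WienerAlgebra
  rw [Complex.exp_eq_exp_ℂ]
  exact NormedSpace.map_exp (eval z) (eval z).cont a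

/-- The coordinate function `z ↦ z` of the circle, as a unit of the Wiener algebra. -/
noncomputable def coordinate : WienerAlgebraˣ where
  val := monomial 1
  inv := monomial (-1)
  val_inv := ext_eval fun z => by simp
  inv_val := ext_eval fun z => by simp

lemma coordinate_zpow (k : ℤ) : ((coordinate ^ k : WienerAlgebraˣ) : WienerAlgebra) = monomial k :=
  ext_eval fun z => by
    calc eval z (coordinate ^ k : WienerAlgebraˣ)
      _ = (Units.map (eval z : WienerAlgebra →* ℂ) coordinate ^ k : ℂˣ) := by rw [← map_zpow]; rfl
      _ = eval z (monomial k) := by simp [coordinate]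

theorem exists_eq_eval (φ : WeakDual.characterSpace ℂ WienerAlgebra) :
    ∃ z : Circle, ∀ a, φ a = eval z a := by
  let w : ℂˣ := Units.map (φ : WienerAlgebra →* ℂ) coordinate
  have map_monomial (k : ℤ) : φ (monomial k) = (w : ℂ) ^ k := by
    rw [← coordinate_zpow, ← Units.val_zpow_eq_zpow_val, ← map_zpow]
    rfl
  have norm_zpow_le (k : ℤ) : ‖(w : ℂ) ^ k‖ ≤ 1 := by
    rw [← map_monomial, ← norm_monomial k]
    exact AlgHom.norm_apply_le_self φ (monomial k)
  have norm_w : ‖(w : ℂ)‖ = 1 :=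
    le_antisymm (by simpa using norm_zpow_le 1)
      ((inv_le_one₀ (norm_pos_iff.2 w.ne_zero)).1 (by simpa using norm_zpow_le (-1)))
  let z : Circle := ⟨w, mem_sphere_zero_iff_norm.2 norm_w⟩
  refine ⟨z, fun a => ?_⟩
  have hasSum_φ := (hasSum_coeff_smul_monomial a).map φ (map_continuous φ)
  simp only [Function.comp_def, map_smul, map_monomial, smul_eq_mul] at hasSum_φ
  exact hasSum_φ.unique (hasSum_eval z a)

theorem isUnit_of_forall_eval_ne_zero {a : WienerAlgebra} (h : ∀ z, eval z a ≠ 0) : IsUnit a := by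
  by_contra ha
  obtain ⟨φ, hφ⟩ := WeakDual.CharacterSpace.exists_apply_eq_zero ha
  obtain ⟨z, hz⟩ := exists_eq_eval φ
  exact h z (hz a ▸ hφ)

end WienerAlgebra

end WienerAlgebra

lemma eventually_exists_eq_mul_exp {A : Type*} [NormedRing A] [NormedAlgebra ℂ A]
    [CompleteSpace A] {a : A} (ha : IsUnit a) : ∀ᶠ b in 𝓝 a, ∃ c, a = b * NormedSpace.exp c := by
  have range_exp_mem : Set.range (NormedSpace.exp : A → A) ∈ 𝓝 1 := by
    have := (hasStrictFDerivAt_exp_zero (𝕂 := ℂ) (𝔸 := A)).map_nhds_eq_of_surj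
      (LinearMap.range_eq_top.2 Function.surjective_id)
    rw [← NormedSpace.exp_zero, ← this]
    exact range_mem_map
  have tendsto_inverse_mul : Tendsto (fun b => Ring.inverse b * a) (𝓝 a) (𝓝 1) := by
    rw [← Ring.inverse_mul_cancel a ha]
    exact (ha.unit_spec ▸ NormedRing.inverse_continuousAt ha.unit).tendsto.mul_const a
  filter_upwards [tendsto_inverse_mul.eventually range_exp_mem, Units.isOpen.mem_nhds ha]
    with b ⟨c, hc⟩ hb
  exact ⟨c, by rw [hc, Ring.mul_inverse_cancel_left _ _ hb]⟩

section Inversion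

variable {E : Type*} [NormedAddCommGroup E] [NormedSpace ℂ E]

lemma diffContOnCl_update_comp_inv [CompleteSpace E] {F : ℂ → E} {L : E}
    (hc : ContinuousOn F {z | 1 ≤ ‖z‖}) (hd : DifferentiableOn ℂ F {z | 1 < ‖z‖})
    (hL : Tendsto F (comap (fun z => ‖z‖) atTop) (𝓝 L)) :
    DiffContOnCl ℂ (Function.update (fun w => F w⁻¹) 0 L) (ball 0 1) := by
  have continuousOn_update :
      ContinuousOn (Function.update (fun w => F w⁻¹) 0 L) (closedBall 0 1) := by
    refine continuousOn_update_iff.2 ⟨hc.comp (continuousOn_inv₀.mono fun w hw => hw.2) ?_,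
      fun _ => hL.comp ?_⟩
    · rintro w ⟨hw, hw0⟩
      simpa using (one_le_inv₀ (norm_pos_iff.2 hw0)).2 (by simpa using hw)
    · rw [comap_norm_atTop]
      exact tendsto_inv₀_nhdsNE_zero.mono_left (nhdsWithin_mono _ fun w hw => hw.2)
  have differentiableOn_update :
      DifferentiableOn ℂ (Function.update (fun w => F w⁻¹) 0 L) (ball 0 1 \ {0}) := by
    refine (hd.comp (differentiableOn_inv.mono fun w hw => hw.2) ?_).congr
      fun w hw => Function.update_of_ne hw.2 _ _
    rintro w ⟨hw, hw0⟩
    simpa using (one_lt_inv₀ (norm_pos_iff.2 hw0)).2 (by simpa using hw)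
  refine .mk_ball ?_ continuousOn_update
  exact (Complex.differentiableOn_compl_singleton_and_continuousAt_iff
    (ball_mem_nhds 0 one_pos)).1 ⟨differentiableOn_update,
      continuousOn_update.continuousAt (closedBall_mem_nhds 0 one_pos)⟩

variable {G : ℂ → E}

lemma continuousOn_comp_inv_of_diffContOnCl (hG : DiffContOnCl ℂ G (ball 0 1)) :
    ContinuousOn (fun z => G z⁻¹) {z | 1 ≤ ‖z‖} :=
  hG.continuousOn_ball.comp
    (continuousOn_inv₀.mono fun z hz => norm_pos_iff.1 (one_pos.trans_le hz))
    fun z hz => by simpa using inv_le_one_of_one_le₀ hz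

lemma differentiableOn_comp_inv_of_diffContOnCl (hG : DiffContOnCl ℂ G (ball 0 1)) :
    DifferentiableOn ℂ (fun z => G z⁻¹) {z | 1 < ‖z‖} :=
  hG.differentiableOn.comp
    (differentiableOn_inv.mono fun z hz => norm_pos_iff.1 (one_pos.trans hz))
    fun z hz => by simpa using inv_lt_one_of_one_lt₀ hz

lemma tendsto_comp_inv_of_diffContOnCl (hG : DiffContOnCl ℂ G (ball 0 1)) :
    Tendsto (fun z => G z⁻¹) (comap (fun z => ‖z‖) atTop) (𝓝 (G 0)) := by
  rw [comap_norm_atTop]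
  exact ((hG.differentiableOn.differentiableAt (ball_mem_nhds 0 one_pos)).continuousAt.tendsto).comp
    tendsto_inv₀_cobounded

end Inversion

/-- The analytic half of the Wiener algebra: functions holomorphic on the open unit disk,
continuous up to the circle, with absolutely summable boundary Fourier coefficients. -/
structure IsWienerPlus (F : ℂ → ℂ) : Prop where
  diffContOnCl : DiffContOnCl ℂ F (ball 0 1)
  summable_norm_coeff : Summable fun k => ‖circleFourierCoeff F k‖

namespace IsWienerPlus

variable {F G : ℂ → ℂ}

lemma of_eq_eval (hF : DiffContOnCl ℂ F (ball 0 1)) {a : WienerAlgebra}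
    (ha : ∀ z : Circle, F z = WienerAlgebra.eval z a) : IsWienerPlus F :=
  ⟨hF, WienerAlgebra.circleFourierCoeff_of_eq_evalCLM ha ▸ a.summable_norm_coeff⟩

lemma exists_eq_eval (hF : IsWienerPlus F) :
    ∃ a, ∀ z : Circle, F z = WienerAlgebra.eval z a :=
  WienerAlgebra.exists_eval_eq_of_summable (hF.diffContOnCl.continuousOn_ball.mono fun _ hz =>
    mem_closedBall_zero_iff.2 hz.le) hF.summable_norm_coeff

lemma const (c : ℂ) : IsWienerPlus fun _ => c :=
  of_eq_eval diffContOnCl_const (a := algebraMap ℂ WienerAlgebra c) fun z =>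
    (AlgHomClass.commutes (WienerAlgebra.eval z) c).symm

lemma id : IsWienerPlus fun z => z :=
  of_eq_eval differentiable_id.diffContOnCl (a := WienerAlgebra.monomial 1) fun z => by simp

lemma sub (hF : IsWienerPlus F) (hG : IsWienerPlus G) : IsWienerPlus fun z => F z - G z := by
  obtain ⟨a, ha⟩ := hF.exists_eq_eval
  obtain ⟨b, hb⟩ := hG.exists_eq_eval
  exact of_eq_eval (hF.diffContOnCl.sub hG.diffContOnCl) (a := a - b) (by simp [ha, hb])

lemma mul (hF : IsWienerPlus F) (hG : IsWienerPlus G) : IsWienerPlus fun z => F z * G z := by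
  obtain ⟨a, ha⟩ := hF.exists_eq_eval
  obtain ⟨b, hb⟩ := hG.exists_eq_eval
  exact of_eq_eval (hF.diffContOnCl.smul hG.diffContOnCl) (a := a * b) (by simp [ha, hb])

lemma exp (hF : IsWienerPlus F) : IsWienerPlus fun z => Complex.exp (F z) := by
  obtain ⟨a, ha⟩ := hF.exists_eq_eval
  exact of_eq_eval (Complex.differentiable_exp.comp_diffContOnCl hF.diffContOnCl)
    (a := NormedSpace.exp a) (by simp [ha, WienerAlgebra.eval_exp])

lemma tsum_mul_pow {b : ℕ → ℂ} (hb : Summable fun k => ‖b k‖) :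
    IsWienerPlus fun z => ∑' k, b k * z ^ k := by
  have norm_term_le (k : ℕ) {z : ℂ} (hz : z ∈ closedBall 0 1) : ‖b k * z ^ k‖ ≤ ‖b k‖ := by
    rw [norm_mul, norm_pow]
    exact mul_le_of_le_one_right (norm_nonneg _)
      (pow_le_one₀ (norm_nonneg _) (mem_closedBall_zero_iff.1 hz))
  have summable_monomials : Summable fun k : ℕ => b k • WienerAlgebra.monomial k :=
    .of_norm (by simpa [norm_smul] using hb)
  refine of_eq_eval (.mk_ball ?_ ?_) (a := ∑' k : ℕ, b k • WienerAlgebra.monomial k) fun z => ?_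
  · exact Complex.differentiableOn_tsum_of_summable_norm hb (fun k => by fun_prop) isOpen_ball
      fun k z hz => norm_term_le k (ball_subset_closedBall hz)
  · exact continuousOn_tsum (fun k => by fun_prop) hb fun k z hz => norm_term_le k hz
  · rw [summable_monomials.map_tsum (WienerAlgebra.eval z) (map_continuous _)]
    simp

end IsWienerPlus

/-- The functions that can occur as the factor `F₊` of a factorization or, in the variable `z⁻¹`, as
the factor `F₋`. -/
structure IsWienerPlusFactor (F : ℂ → ℂ) : Prop extends IsWienerPlus F where
  ne_zero : ∀ z ∈ closedBall 0 1, F z ≠ 0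

namespace IsWienerPlusFactor

variable {F G : ℂ → ℂ}

lemma const {c : ℂ} (hc : c ≠ 0) : IsWienerPlusFactor fun _ => c :=
  ⟨.const c, fun _ _ => hc⟩

lemma mul (hF : IsWienerPlusFactor F) (hG : IsWienerPlusFactor G) :
    IsWienerPlusFactor fun z => F z * G z :=
  ⟨hF.toIsWienerPlus.mul hG.toIsWienerPlus,
    fun z hz => mul_ne_zero (hF.ne_zero z hz) (hG.ne_zero z hz)⟩

lemma diffContOnCl_inv (hF : IsWienerPlusFactor F) :
    DiffContOnCl ℂ (fun z => (F z)⁻¹) (ball 0 1) :=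
  hF.diffContOnCl.inv fun z hz => hF.ne_zero z (closure_ball_subset_closedBall hz)

end IsWienerPlusFactor

lemma IsWienerPlus.isWienerPlusFactor_exp {F : ℂ → ℂ} (hF : IsWienerPlus F) :
    IsWienerPlusFactor fun z => Complex.exp (F z) :=
  ⟨hF.exp, fun _ _ => Complex.exp_ne_zero _⟩

theorem WienerAlgebra.exists_eval_eq_add_comp_inv (a : WienerAlgebra) :
    ∃ F G, IsWienerPlus F ∧ IsWienerPlus G ∧
      ∀ z : Circle, eval z a = F z + G (z : ℂ)⁻¹ := by
  have negSucc_injective : Function.Injective fun k : ℕ => -((k : ℤ) + 1) :=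
    fun k l h => by simpa using h
  refine ⟨_, _, .tsum_mul_pow (a.summable_norm_coeff.comp_injective Nat.cast_injective),
    .mul .id (.tsum_mul_pow (a.summable_norm_coeff.comp_injective negSucc_injective)), fun z => ?_⟩
  have hasSum_comp {g : ℕ → ℤ} (hg : Function.Injective g) :=
    ((hasSum_eval z a).summable.comp_injective hg).hasSum
  have term_eq (k : ℕ) : (z : ℂ)⁻¹ * (a.coeff (-((k : ℤ) + 1)) * (z : ℂ)⁻¹ ^ k) =
      a.coeff (-((k : ℤ) + 1)) * (z : ℂ) ^ (-((k : ℤ) + 1)) := by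
    rw [zpow_neg, zpow_add_one₀ z.coe_ne_zero, zpow_natCast, mul_inv, inv_pow]
    ring
  refine (hasSum_eval z a).unique (HasSum.of_nat_of_neg_add_one ?_ ?_)
  · simpa only [Function.comp_def, zpow_natCast] using hasSum_comp Nat.cast_injective
  · simp only [← tsum_mul_left, term_eq]
    exact hasSum_comp negSucc_injective

lemma exists_polynomial_eval_eq_sum_zpow_mul_pow {K : Type*} [Field K] (s : Finset ℤ)
    (c : ℤ → K) : ∃ (n : ℕ) (P : Polynomial K), ∀ z ≠ 0,
      P.eval z = (∑ k ∈ s, c k * z ^ k) * z ^ n := by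
  let n := s.sup Int.natAbs
  refine ⟨n, ∑ k ∈ s, Polynomial.monomial (k + n).toNat (c k), fun z hz => ?_⟩
  rw [Polynomial.eval_finsetSum, Finset.sum_mul]
  refine Finset.sum_congr rfl fun k hk => ?_
  have natAbs_le : k.natAbs ≤ n := Finset.le_sup hk
  rw [Polynomial.eval_monomial, mul_assoc, ← zpow_natCast, ← zpow_natCast, ← zpow_add₀ hz,
    Int.toNat_of_nonneg (by omega)]

namespace WienerScalarFactorization

variable {f g : ℂ → ℂ} {κ μ : ℤ} {a : WienerAlgebra}

lemma of_isWienerPlusFactor {F G : ℂ → ℂ} (hF : IsWienerPlusFactor F) (hG : IsWienerPlusFactor G)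
    (hf : ∀ z : Circle, f z = F z * (z : ℂ) ^ κ * G (z : ℂ)⁻¹) :
    WienerScalarFactorization f κ := by
  have inv_mem {z : ℂ} (hz : 1 ≤ ‖z‖) : z⁻¹ ∈ closedBall 0 1 := by
    simpa using inv_le_one_of_one_le₀ hz
  refine ⟨F, fun z => G z⁻¹, G 0, hF.diffContOnCl.continuousOn_ball,
    hF.diffContOnCl.differentiableOn, hF.ne_zero, hF.summable_norm_coeff,
    continuousOn_comp_inv_of_diffContOnCl hG.diffContOnCl,
    differentiableOn_comp_inv_of_diffContOnCl hG.diffContOnCl,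
    fun z hz => hG.ne_zero _ (inv_mem hz), hG.ne_zero 0 (mem_closedBall_self zero_le_one),
    tendsto_comp_inv_of_diffContOnCl hG.diffContOnCl,
    summable_norm_circleFourierCoeff_comp_inv.2 hG.summable_norm_coeff,
    fun z hz => hf ⟨z, mem_sphere_zero_iff_norm.2 hz⟩⟩

lemma exists_isWienerPlusFactor (hf : WienerScalarFactorization f κ) :
    ∃ F G, IsWienerPlusFactor F ∧ IsWienerPlusFactor G ∧
      ∀ z : Circle, f z = F z * (z : ℂ) ^ κ * G (z : ℂ)⁻¹ := by
  obtain ⟨F, Fm, L, continuousOn_F, differentiableOn_F, F_ne_zero, summable_F, continuousOn_Fm,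
    differentiableOn_Fm, Fm_ne_zero, L_ne_zero, tendsto_Fm, summable_Fm, eq_mul⟩ := hf
  let G : ℂ → ℂ := Function.update (fun w => Fm w⁻¹) 0 L
  have G_of_ne {w : ℂ} (hw : w ≠ 0) : G w = Fm w⁻¹ := Function.update_of_ne hw _ _
  have circleFourierCoeff_G : circleFourierCoeff G = circleFourierCoeff fun w => Fm w⁻¹ :=
    circleFourierCoeff_congr fun z => G_of_ne z.coe_ne_zero
  refine ⟨F, G, ⟨⟨.mk_ball differentiableOn_F continuousOn_F, summable_F⟩, F_ne_zero⟩,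
    ⟨⟨diffContOnCl_update_comp_inv continuousOn_Fm differentiableOn_Fm tendsto_Fm, ?_⟩,
      fun w hw => ?_⟩, fun z => ?_⟩
  · rw [circleFourierCoeff_G]
    exact summable_norm_circleFourierCoeff_comp_inv.2 summable_Fm
  · obtain rfl | hw0 := eq_or_ne w 0
    · simpa only [G, Function.update_self] using L_ne_zero
    · rw [G_of_ne hw0]
      exact Fm_ne_zero _ <| by
        simpa using (one_le_inv₀ (norm_pos_iff.2 hw0)).2 (mem_closedBall_zero_iff.1 hw)
  · rw [G_of_ne (inv_ne_zero z.coe_ne_zero), inv_inv]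
    exact eq_mul z z.norm_coe

lemma congr (hf : WienerScalarFactorization f κ) (hfg : ∀ z : Circle, g z = f z) :
    WienerScalarFactorization g κ :=
  let ⟨_, _, hF, hG, eq_mul⟩ := hf.exists_isWienerPlusFactor
  of_isWienerPlusFactor hF hG fun z => (hfg z).trans (eq_mul z)

lemma mul (hf : WienerScalarFactorization f κ) (hg : WienerScalarFactorization g μ) :
    WienerScalarFactorization (fun z => f z * g z) (κ + μ) := by
  obtain ⟨F, F', hF, hF', f_eq⟩ := hf.exists_isWienerPlusFactor
  obtain ⟨G, G', hG, hG', g_eq⟩ := hg.exists_isWienerPlusFactor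
  refine of_isWienerPlusFactor (hF.mul hG) (hF'.mul hG') fun z => ?_
  simp only [f_eq, g_eq, zpow_add₀ z.coe_ne_zero]
  ring

lemma of_isWienerPlusFactor_left (hf : IsWienerPlusFactor f) : WienerScalarFactorization f 0 :=
  of_isWienerPlusFactor hf (.const one_ne_zero) fun z => by simp

lemma zpow (k : ℤ) : WienerScalarFactorization (fun z => z ^ k) k :=
  of_isWienerPlusFactor (.const one_ne_zero) (.const one_ne_zero) fun z => by simp

theorem exists_sub {a : ℂ} (ha : ‖a‖ ≠ 1) :
    ∃ κ, WienerScalarFactorization (fun z => z - a) κ := by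
  obtain ha | ha := ha.lt_or_gt
  · refine ⟨1, of_isWienerPlusFactor (.const one_ne_zero) (G := fun w => 1 - a * w)
      ⟨(IsWienerPlus.const 1).sub ((IsWienerPlus.const a).mul .id), fun w hw => ?_⟩ fun z => ?_⟩
    · have norm_lt : ‖a * w‖ < 1 := (norm_mul a w).trans_lt <|
        mul_lt_one_of_nonneg_of_lt_one_left (norm_nonneg a) ha (mem_closedBall_zero_iff.1 hw)
      exact sub_ne_zero_of_ne fun h => by simp [← h] at norm_lt
    · have := z.coe_ne_zero
      field_simp
  · refine ⟨0, of_isWienerPlusFactor_left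
      ⟨IsWienerPlus.id.sub (.const a), fun w hw => sub_ne_zero_of_ne ?_⟩⟩
    rintro rfl
    exact ha.not_ge (mem_closedBall_zero_iff.1 hw)

theorem exists_prod_sub (s : Multiset ℂ) (hs : ∀ a ∈ s, ‖a‖ ≠ 1) :
    ∃ κ, WienerScalarFactorization (fun z => (s.map fun a => z - a).prod) κ := by
  induction s using Multiset.induction_on with
  | empty => exact ⟨0, by simpa using zpow 0⟩
  | cons a s ih =>
    obtain ⟨κ, hκ⟩ := exists_sub (hs a (Multiset.mem_cons_self a s))
    obtain ⟨μ, hμ⟩ := ih fun b hb => hs b (Multiset.mem_cons_of_mem hb)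
    exact ⟨κ + μ, by simpa using hκ.mul hμ⟩

theorem exists_eval_polynomial {P : Polynomial ℂ} (hP : ∀ z : Circle, P.eval (z : ℂ) ≠ 0) :
    ∃ κ, WienerScalarFactorization (fun z => P.eval z) κ := by
  have P_ne_zero : P ≠ 0 := by
    rintro rfl
    exact hP 1 Polynomial.eval_zero
  have norm_root_ne_one (a : ℂ) (ha : a ∈ P.roots) : ‖a‖ ≠ 1 := fun norm_a =>
    hP ⟨a, mem_sphere_zero_iff_norm.2 norm_a⟩ (Polynomial.isRoot_of_mem_roots ha)
  obtain ⟨κ, hκ⟩ := exists_prod_sub P.roots norm_root_ne_one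
  exact ⟨0 + κ, ((of_isWienerPlusFactor_left <| .const <|
    Polynomial.leadingCoeff_ne_zero.2 P_ne_zero).mul hκ).congr
      fun z => (IsAlgClosed.splits P).eval_eq_prod_roots z⟩

theorem exists_sum_zpow (s : Finset ℤ) (c : ℤ → ℂ)
    (hc : ∀ z : Circle, ∑ k ∈ s, c k * (z : ℂ) ^ k ≠ 0) :
    ∃ κ, WienerScalarFactorization (fun z => ∑ k ∈ s, c k * z ^ k) κ := by
  obtain ⟨n, P, P_eval⟩ := exists_polynomial_eval_eq_sum_zpow_mul_pow s c
  obtain ⟨κ, hκ⟩ := exists_eval_polynomial (P := P) fun z => by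
    rw [P_eval z z.coe_ne_zero]
    exact mul_ne_zero (hc z) (pow_ne_zero n z.coe_ne_zero)
  refine ⟨κ + -n, (hκ.mul (zpow (-n))).congr fun z => ?_⟩
  rw [P_eval z z.coe_ne_zero, zpow_neg, zpow_natCast,
    mul_inv_cancel_right₀ (pow_ne_zero n z.coe_ne_zero)]

theorem mul_exp_eval (hg : WienerScalarFactorization g κ)
    (hf : ∀ z : Circle, f z = g z * Complex.exp (WienerAlgebra.eval z a)) :
    WienerScalarFactorization f κ := by
  obtain ⟨F, G, hF, hG, a_eq⟩ := WienerAlgebra.exists_eval_eq_add_comp_inv a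
  have exp_factorization :
      WienerScalarFactorization (fun z => Complex.exp (F z) * Complex.exp (G z⁻¹)) 0 :=
    of_isWienerPlusFactor hF.isWienerPlusFactor_exp hG.isWienerPlusFactor_exp fun z => by simp
  exact add_zero κ ▸ (hg.mul exp_factorization).congr fun z => by
    rw [hf, a_eq, Complex.exp_add]

theorem exists_of_eq_eval (hf : ∀ z : Circle, f z = WienerAlgebra.eval z a)
    (hf0 : ∀ z : Circle, f z ≠ 0) : ∃ κ, WienerScalarFactorization f κ := by
  have isUnit_a : IsUnit a := WienerAlgebra.isUnit_of_forall_eval_ne_zero fun z => hf z ▸ hf0 z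
  obtain ⟨s, c, a_eq⟩ := (a.hasSum_coeff_smul_monomial.eventually
    (eventually_exists_eq_mul_exp isUnit_a)).exists
  have f_eq (z : Circle) : f z =
      (∑ k ∈ s, a.coeff k * (z : ℂ) ^ k) * Complex.exp (WienerAlgebra.eval z c) := by
    rw [hf, congrArg (WienerAlgebra.eval z) a_eq]
    simp [WienerAlgebra.eval_exp]
  obtain ⟨κ, hκ⟩ := exists_sum_zpow s a.coeff fun z => left_ne_zero_of_mul (f_eq z ▸ hf0 z)
  exact ⟨κ, hκ.mul_exp_eval f_eq⟩

end WienerScalarFactorization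

section Uniqueness

lemma eq_at_zero_of_eq_comp_inv {E : Type*} [NormedAddCommGroup E] [NormedSpace ℂ E]
    [CompleteSpace E] {F G : ℂ → E} (hF : DiffContOnCl ℂ F (ball 0 1))
    (hG : DiffContOnCl ℂ G (ball 0 1)) (hFG : ∀ z : Circle, F z = G (z : ℂ)⁻¹) : F 0 = G 0 :=
  calc F 0
    _ = Real.circleAverage F 0 1 := (DiffContOnCl.circleAverage (by simpa using hF)).symm
    _ = Real.circleAverage (fun z => G z⁻¹) 0 1 :=
      Real.circleAverage_congr_sphere fun z hz =>
        hFG ⟨z, mem_sphere_zero_iff_norm.2 (by simpa using hz)⟩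
    _ = Real.circleAverage G 0 1 := Real.circleAverage_zero_one_congr_inv
    _ = G 0 := DiffContOnCl.circleAverage (by simpa using hG)

theorem WienerScalarFactorization.le {f : ℂ → ℂ} {κ μ : ℤ} (hκ : WienerScalarFactorization f κ)
    (hμ : WienerScalarFactorization f μ) : κ ≤ μ := by
  obtain ⟨F, F', hF, hF', f_eq⟩ := hκ.exists_isWienerPlusFactor
  obtain ⟨G, G', hG, hG', f_eq'⟩ := hμ.exists_isWienerPlusFactor
  by_contra! hlt
  obtain ⟨n, rfl⟩ : ∃ n : ℕ, κ = μ + (n + 1) := ⟨(κ - μ - 1).toNat, by omega⟩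
  have quotient_eq (z : Circle) :
      (z : ℂ) ^ (n + 1) * F z * (G z)⁻¹ = G' (z : ℂ)⁻¹ * (F' (z : ℂ)⁻¹)⁻¹ := by
    have G_ne_zero : G z ≠ 0 := hG.ne_zero z (by simp [z.norm_coe])
    have F'_ne_zero : F' (z : ℂ)⁻¹ ≠ 0 := hF'.ne_zero _ (by simp [z.norm_coe])
    rw [← div_eq_mul_inv, ← div_eq_mul_inv, div_eq_div_iff G_ne_zero F'_ne_zero]
    refine mul_left_cancel₀ (zpow_ne_zero μ z.coe_ne_zero) ?_
    have product_eq := (f_eq z).symm.trans (f_eq' z)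
    rw [zpow_add₀ z.coe_ne_zero, ← Nat.cast_add_one, zpow_natCast] at product_eq
    linear_combination product_eq
  have value_eq : (0 : ℂ) ^ (n + 1) * F 0 * (G 0)⁻¹ = G' 0 * (F' 0)⁻¹ :=
    eq_at_zero_of_eq_comp_inv (F := fun z => z ^ (n + 1) * F z * (G z)⁻¹)
      (G := fun w => G' w * (F' w)⁻¹)
      (((differentiable_id.pow (n + 1)).diffContOnCl.smul hF.diffContOnCl).smul hG.diffContOnCl_inv)
      (hG'.diffContOnCl.smul hF'.diffContOnCl_inv) quotient_eq
  have zero_mem : (0 : ℂ) ∈ closedBall 0 1 := mem_closedBall_self zero_le_one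
  refine mul_ne_zero (hG'.ne_zero 0 zero_mem) (inv_ne_zero (hF'.ne_zero 0 zero_mem)) ?_
  rw [← value_eq, zero_pow n.succ_ne_zero, zero_mul, zero_mul]

end Uniqueness

/-- Every nowhere-vanishing continuous function on the unit circle with
absolutely summable Fourier coefficients (i.e. every invertible element of the Wiener
algebra) admits a Birkhoff decomposition `f = F₊ · z^κ · F₋`, and the integer `κ` is
uniquely determined by `f`. -/
theorem stmt_7 (f : ℂ → ℂ) (hfc : ContinuousOn f {z : ℂ | ‖z‖ = 1})
    (hf0 : ∀ z : ℂ, ‖z‖ = 1 → f z ≠ 0)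
    (hW : Summable fun k : ℤ => ‖circleFourierCoeff f k‖) :
    ∃ κ : ℤ, WienerScalarFactorization f κ ∧
      ∀ κ' : ℤ, WienerScalarFactorization f κ' → κ' = κ := by
  obtain ⟨a, ha⟩ := WienerAlgebra.exists_eval_eq_of_summable hfc hW
  obtain ⟨κ, hκ⟩ := WienerScalarFactorization.exists_of_eq_eval ha fun z => hf0 z z.norm_coe
  exact ⟨κ, hκ, fun κ' hκ' => le_antisymm (hκ'.le hκ) (hκ.le hκ')⟩
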